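/- Let T : ℝ^d → ℝ^d be γ-contractive with respect to a norm ‖·‖_c, with fixed point θ*, and let (w_t)_{t≥0} be i.i.d. zero-mean ℝ^d-valued random vectors with E‖w₀‖² < ∞. Then there exists ᾱ' > 0 such that for every constant stepsize α ∈ (0, ᾱ']: (i) there exists a unique stationary probability measure μ_α with finite second moment for the SA Markov kernel; (ii) for every initial distribution of θ₀ with finite second moment there is a constant c (independent of α and t) such that W₂²(law(θ_t), μ_α) ≤ c · (1 − α(1 − √γ))^t for all t ≥ 0, where W₂ is taken with respect to ‖·‖_c; and (iii) there is a constant C independent of α such that ∫ ‖x − θ*‖₂² dμ_α(x) ≤ C α. -/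

import Mathlib

open MeasureTheory ProbabilityTheory

noncomputable section

/-- A function on `ℝ^d` satisfying the axioms of a norm. -/
structure IsNormLike {V : Type*} [AddCommGroup V] [Module ℝ V] (c : V → ℝ) : Prop where
  add_le : ∀ x y, c (x + y) ≤ c x + c y
  smul_eq : ∀ (r : ℝ) (x : V), c (r • x) = |r| * c x
  pos : ∀ x, x ≠ 0 → 0 < c x

/-- `π` is a coupling of `μ` and `ν`. -/
def IsCoupling {X : Type*} [MeasurableSpace X] (π : Measure (X × X)) (μ ν : Measure X) : Prop :=
  π.map Prod.fst = μ ∧ π.map Prod.snd = ν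

/-- Squared Wasserstein-2 distance with respect to the norm-like function `c`. -/
def W2sq {X : Type*} [MeasurableSpace X] [AddGroup X] (c : X → ℝ) (μ ν : Measure X) : ℝ :=
  sInf { r : ℝ | ∃ π : Measure (X × X), IsCoupling π μ ν ∧
    Integrable (fun p => (c (p.1 - p.2)) ^ 2) π ∧ r = ∫ p, (c (p.1 - p.2)) ^ 2 ∂π }

/-- One step of the SA Markov kernel with stepsize `α` and noise distribution `νw`,
at the level of laws. -/
def saStep {d : ℕ} (T : EuclideanSpace ℝ (Fin d) → EuclideanSpace ℝ (Fin d)) (α : ℝ)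
    (νw : Measure (EuclideanSpace ℝ (Fin d))) (μ : Measure (EuclideanSpace ℝ (Fin d))) :
    Measure (EuclideanSpace ℝ (Fin d)) :=
  Measure.map (fun p => p.1 + α • (T p.1 - p.1 + p.2)) (μ.prod νw)

/-!
Two copies of the iteration driven by the same noise approach each other in `‖·‖_c` by the factor
`1 - α(1 - γ)` at every step. This synchronous coupling gives the `W₂` rate, because
`(1 - α(1 - γ))² ≤ 1 - α(1 - √γ)`, and, through the Lévy–Prokhorov distance, uniqueness of the
stationary law even without a moment assumption.

For existence, let `ω` be an i.i.d. noise sequence and `X` a square integrable function of it. The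
map sending `X` to `ω ↦ X(ω') + α(T(X(ω')) - X(ω') + ω₀)`, with `ω'` the shifted sequence, is a
contraction of `L²` for the norm built from `‖·‖_c`, and the law of its fixed point is stationary.

For the moment bound, let `Y` be the fixed point for `T = 0`, a moving average of the noise. It is
driven by the same noise as `X`, so the noise cancels in `Z = X - θ* - Y`, and convexity of the
square together with stationarity gives `E‖Z‖_c² ≤ (γ/(1-γ))² E‖Y‖_c²`. In the Hilbert norm
`E‖Y‖² = α/(2-α) E‖w‖² ≤ α E‖w‖²`. No smoothing of `‖·‖_c` is needed.
-/

open Filter Function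
open scoped ENNReal NNReal Topology

/-- A norm-like function as a bundled seminorm. -/
def IsNormLike.toSeminorm {V : Type*} [AddCommGroup V] [Module ℝ V] {c : V → ℝ}
    (hc : IsNormLike c) : Seminorm ℝ V :=
  Seminorm.of c hc.add_le hc.smul_eq

section FiniteDimensional

variable {E : Type*} [NormedAddCommGroup E] [NormedSpace ℝ E] [FiniteDimensional ℝ E]

theorem continuous_seminorm_of_finiteDimensional (c : Seminorm ℝ E) : Continuous c :=
  continuousOn_univ.1 (c.convexOn.locallyLipschitzOn isOpen_univ).continuousOn

theorem exists_seminorm_le_norm (c : Seminorm ℝ E) : ∃ K : ℝ≥0, ∀ x, c x ≤ K * ‖x‖ := by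
  obtain ⟨K, hK₀, hK⟩ :=
    Seminorm.bound_of_continuous_normedSpace c (continuous_seminorm_of_finiteDimensional c)
  exact ⟨⟨K, hK₀.le⟩, hK⟩

theorem exists_norm_le_seminorm {c : Seminorm ℝ E} (hc : ∀ x, x ≠ 0 → 0 < c x) :
    ∃ k : ℝ≥0, ∀ x, ‖x‖ ≤ k * c x := by
  obtain ⟨ε, hε₀, hε⟩ := (isCompact_sphere (0 : E) 1).exists_forall_le'
    (continuous_seminorm_of_finiteDimensional c).continuousOn
    fun x hx => hc x (ne_zero_of_mem_unit_sphere ⟨x, hx⟩)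
  refine ⟨⟨ε⁻¹, (inv_pos.2 hε₀).le⟩, fun x => ?_⟩
  rcases eq_or_ne x 0 with rfl | hx
  · rw [norm_zero, map_zero, mul_zero]
  · have hunit : ε ≤ c (‖x‖⁻¹ • x) :=
      hε _ (mem_sphere_zero_iff_norm.2 (norm_smul_inv_norm (𝕜 := ℝ) hx))
    rw [map_smul_eq_mul, norm_inv, norm_norm, inv_mul_eq_div,
      le_div_iff₀ (norm_pos_iff.2 hx)] at hunit
    exact (le_inv_mul_iff₀ hε₀).2 hunit

end FiniteDimensional

theorem continuous_of_le_norm {E : Type*} [NormedAddCommGroup E] [NormedSpace ℝ E]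
    {c : Seminorm ℝ E} {K : ℝ≥0} (hK : ∀ x, c x ≤ K * ‖x‖) : Continuous c :=
  (LipschitzWith.of_dist_le_mul fun x y => by
    rw [dist_eq_norm x y]
    exact (abs_sub_map_le_sub c x y).trans (hK _)).continuous

theorem memLp_seminorm {Ω E : Type*} [MeasurableSpace Ω] {P : Measure Ω} [NormedAddCommGroup E]
    [NormedSpace ℝ E] {c : Seminorm ℝ E} {K : ℝ≥0} (hK : ∀ x, c x ≤ K * ‖x‖) {q : ℝ≥0∞} {f : Ω → E}
    (hf : MemLp f q P) : MemLp (fun ω => c (f ω)) q P :=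
  hf.of_le_mul ((continuous_of_le_norm hK).comp_aestronglyMeasurable hf.aestronglyMeasurable)
    (ae_of_all _ fun _ => (Real.norm_of_nonneg (apply_nonneg c _)).trans_le (hK _))

section RandomIteration

variable {S S' W : Type*} [MeasurableSpace S] [MeasurableSpace S'] [MeasurableSpace W]
  {F : S → W → S} {G : S' → W → S'} {μ μ' : Measure S} {ν : Measure W}

/-- The law of `F x w` for independent `x ∼ μ` and `w ∼ ν`: one step, at the level of laws, of the
iteration `xₙ₊₁ = F xₙ wₙ` driven by i.i.d. noise of law `ν`. -/
def randomStep (F : S → W → S) (ν : Measure W) (μ : Measure S) : Measure S :=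
  (μ.prod ν).map (uncurry F)

/-- Two copies of the iteration `F` driven by the same noise (synchronous coupling). -/
def syncMap (F : S → W → S) (p : S × S) (w : W) : S × S :=
  (F p.1 w, F p.2 w)

instance [SFinite μ] [SFinite ν] : SFinite (randomStep F ν μ) :=
  inferInstanceAs (SFinite ((μ.prod ν).map (uncurry F)))

theorem measurable_uncurry_syncMap (hF : Measurable (uncurry F)) :
    Measurable (uncurry (syncMap F)) := by
  have h₁ : Measurable fun p : (S × S) × W => (p.1.1, p.2) := by fun_prop
  have h₂ : Measurable fun p : (S × S) × W => (p.1.2, p.2) := by fun_prop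
  exact (hF.comp h₁).prodMk (hF.comp h₂)

theorem map_randomStep (hF : Measurable (uncurry F)) (hG : Measurable (uncurry G)) {g : S → S'}
    (hg : Measurable g) (hFG : ∀ x w, g (F x w) = G (g x) w) [SFinite μ] [SFinite ν] :
    (randomStep F ν μ).map g = randomStep G ν (μ.map g) := by
  have hprod : (μ.map g).prod ν = (μ.prod ν).map (Prod.map g id) := by
    conv_lhs => rw [← Measure.map_id (μ := ν)]
    exact Measure.map_prod_map μ ν hg measurable_id
  rw [randomStep, randomStep, hprod, Measure.map_map hg hF,
    Measure.map_map hG (hg.prodMap measurable_id)]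
  exact congrArg (Measure.map · _) (funext fun p => hFG p.1 p.2)

theorem map_randomStep_iterate (hF : Measurable (uncurry F)) (hG : Measurable (uncurry G))
    {g : S → S'} (hg : Measurable g) (hFG : ∀ x w, g (F x w) = G (g x) w) [SFinite μ] [SFinite ν]
    (n : ℕ) : ((randomStep F ν)^[n] μ).map g = (randomStep G ν)^[n] (μ.map g) := by
  induction n generalizing μ with
  | zero => rfl
  | succ n ih => rw [iterate_succ_apply, iterate_succ_apply, ih, map_randomStep hF hG hg hFG]

theorem IsCoupling.randomStep_iterate {π : Measure (S × S)} (hF : Measurable (uncurry F))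
    (hπ : IsCoupling π μ μ') [SFinite π] [SFinite ν] (n : ℕ) :
    IsCoupling ((randomStep (syncMap F) ν)^[n] π)
      ((randomStep F ν)^[n] μ) ((randomStep F ν)^[n] μ') := by
  have hsync := measurable_uncurry_syncMap hF
  constructor
  · rw [map_randomStep_iterate hsync hF measurable_fst fun _ _ => rfl, hπ.1]
  · rw [map_randomStep_iterate hsync hF measurable_snd fun _ _ => rfl, hπ.2]

theorem isCoupling_prod [IsProbabilityMeasure μ] [IsProbabilityMeasure μ'] :
    IsCoupling (μ.prod μ') μ μ' :=
  ⟨measurePreserving_fst.map_eq, measurePreserving_snd.map_eq⟩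

theorem lintegral_randomStep_iterate_le (hF : Measurable (uncurry F)) {V : S → ℝ}
    (hV : Measurable V) {φ : ℝ → ℝ≥0∞} (hφ : Monotone φ) {r : ℝ} (hr : 0 ≤ r)
    (hFV : ∀ x w, V (F x w) ≤ r * V x) [SFinite μ] [IsProbabilityMeasure ν] (n : ℕ) :
    ∫⁻ x, φ (V x) ∂(randomStep F ν)^[n] μ ≤ ∫⁻ x, φ (r ^ n * V x) ∂μ := by
  induction n generalizing μ with
  | zero => simp
  | succ n ih =>
    have hψ : Monotone fun t => φ (r ^ n * t) := fun s t hst =>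
      hφ (mul_le_mul_of_nonneg_left hst (pow_nonneg hr n))
    calc ∫⁻ x, φ (V x) ∂(randomStep F ν)^[n + 1] μ
        ≤ ∫⁻ x, φ (r ^ n * V x) ∂randomStep F ν μ := ih
      _ = ∫⁻ p, φ (r ^ n * V (F p.1 p.2)) ∂μ.prod ν :=
        lintegral_map (hψ.measurable.comp hV) hF
      _ ≤ ∫⁻ p, φ (r ^ n * (r * V p.1)) ∂μ.prod ν :=
        lintegral_mono fun p => hψ (hFV p.1 p.2)
      _ = ∫⁻ x, φ (r ^ n * (r * V x)) ∂μ :=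
        measurePreserving_fst.lintegral_comp (hψ.measurable.comp (hV.const_mul r))
      _ = ∫⁻ x, φ (r ^ (n + 1) * V x) ∂μ := by simp only [pow_succ, mul_assoc]

theorem measure_randomStep_iterate_le (hF : Measurable (uncurry F)) {V : S → ℝ}
    (hV : Measurable V) {r : ℝ} (hr : 0 ≤ r) (hFV : ∀ x w, V (F x w) ≤ r * V x) [SFinite μ]
    [IsProbabilityMeasure ν] (ε : ℝ) (n : ℕ) :
    (randomStep F ν)^[n] μ {x | ε ≤ V x} ≤ μ {x | ε ≤ r ^ n * V x} := by
  let φ : ℝ → ℝ≥0∞ := (Set.Ici ε).indicator 1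
  have hφ : Monotone φ := fun s t hst => by
    by_cases hs : s ∈ Set.Ici ε
    · simp only [φ, Set.indicator_of_mem hs, Set.indicator_of_mem (Set.mem_Ici.2 (hs.trans hst)),
        Pi.one_apply, le_refl]
    · simp only [φ, Set.indicator_of_notMem hs, zero_le]
  have hφV : ∀ (m : Measure S) {U : S → ℝ}, Measurable U →
      ∫⁻ x, φ (U x) ∂m = m {x | ε ≤ U x} := fun m U hU =>
    lintegral_indicator_one (measurableSet_le measurable_const hU)
  rw [← hφV _ hV, ← hφV _ (hV.const_mul _)]
  exact lintegral_randomStep_iterate_le hF hV hφ hr hFV n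

theorem tendsto_measure_le_pow_mul [IsFiniteMeasure μ] {V : S → ℝ} (hV : Measurable V) {r : ℝ}
    (hr₀ : 0 ≤ r) (hr₁ : r < 1) {ε : ℝ} (hε : 0 < ε) :
    Tendsto (fun n : ℕ => μ {x | ε ≤ r ^ n * V x}) atTop (𝓝 0) := by
  have hlim : TendstoInMeasure μ (fun n x => r ^ n * V x) atTop 0 := by
    refine tendstoInMeasure_of_tendsto_ae
      (fun n => (hV.const_mul _).aestronglyMeasurable) (ae_of_all _ fun x => ?_)
    simpa only [zero_mul, Pi.zero_apply] using
      (tendsto_pow_atTop_nhds_zero_of_lt_one hr₀ hr₁).mul_const (V x)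
  refine tendsto_of_tendsto_of_tendsto_of_le_of_le tendsto_const_nhds
    (tendstoInMeasure_iff_norm.1 hlim ε hε) (fun _ => zero_le) fun n => measure_mono fun x hx => ?_
  simp only [Pi.zero_apply, sub_zero, Set.mem_ofPred_eq] at hx ⊢
  exact hx.trans (Real.le_norm_self _)

section Uniqueness

variable [MetricSpace S] [BorelSpace S]

theorem levyProkhorovEDist_le_of_forall_exists_isCoupling [IsProbabilityMeasure μ]
    [IsProbabilityMeasure μ'] {δ : ℝ≥0∞}
    (h : ∀ ε : ℝ, δ < ENNReal.ofReal ε →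
      ∃ π, IsCoupling π μ μ' ∧ π {p | ε ≤ dist p.1 p.2} ≤ ENNReal.ofReal ε) :
    levyProkhorovEDist μ μ' ≤ δ := by
  refine levyProkhorovEDist_le_of_forall_le μ μ' δ fun ε B hδε hε hB => ?_
  have hε' : ENNReal.ofReal ε.toReal = ε := ENNReal.ofReal_toReal hε.ne
  obtain ⟨π, hπ, hπε⟩ := h ε.toReal (hε'.symm ▸ hδε)
  have hsub : Prod.fst ⁻¹' B ⊆
      Prod.snd ⁻¹' Metric.thickening ε.toReal B ∪ {p : S × S | ε.toReal ≤ dist p.1 p.2} := by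
    intro p hp
    by_cases hdist : ε.toReal ≤ dist p.1 p.2
    · exact Or.inr hdist
    · exact Or.inl (Metric.mem_thickening_iff.2 ⟨p.1, hp, by rw [dist_comm]; exact not_le.1 hdist⟩)
  calc μ B = π (Prod.fst ⁻¹' B) := by rw [← hπ.1, Measure.map_apply measurable_fst hB]
    _ ≤ π (Prod.snd ⁻¹' Metric.thickening ε.toReal B) + π {p | ε.toReal ≤ dist p.1 p.2} :=
      (measure_mono hsub).trans (measure_union_le _ _)
    _ ≤ μ' (Metric.thickening ε.toReal B) + ε := by
      rw [← hπ.2, Measure.map_apply measurable_snd Metric.isOpen_thickening.measurableSet]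
      gcongr
      exact hπε.trans_eq hε'

theorem eq_of_levyProkhorovEDist_eq_zero [IsProbabilityMeasure μ] [IsProbabilityMeasure μ']
    (h : levyProkhorovEDist μ μ' = 0) : μ = μ' := by
  refine ext_of_generate_finite _ (BorelSpace.measurable_eq.trans borel_eq_generateFrom_isClosed)
    isPiSystem_isClosed (fun A hA => ?_) (by simp only [measure_univ])
  exact measure_eq_measure_of_levyProkhorovEDist_eq_zero_of_isClosed h hA
    ⟨1, one_pos, measure_ne_top _ _⟩ ⟨1, one_pos, measure_ne_top _ _⟩

theorem eq_of_randomStep_eq (hF : Measurable (uncurry F)) {V : S × S → ℝ} (hV : Measurable V)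
    (hdist : ∀ p, dist p.1 p.2 ≤ V p) {r : ℝ} (hr₀ : 0 ≤ r) (hr₁ : r < 1)
    (hFV : ∀ p w, V (syncMap F p w) ≤ r * V p) [IsProbabilityMeasure ν] [IsProbabilityMeasure μ]
    [IsProbabilityMeasure μ'] (hμ : randomStep F ν μ = μ) (hμ' : randomStep F ν μ' = μ') :
    μ = μ' := by
  refine eq_of_levyProkhorovEDist_eq_zero (nonpos_iff_eq_zero.1 ?_)
  refine levyProkhorovEDist_le_of_forall_exists_isCoupling fun ε hε => ?_
  have hlim := tendsto_measure_le_pow_mul (μ := μ.prod μ') hV hr₀ hr₁ (ENNReal.ofReal_pos.1 hε)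
  obtain ⟨n, hn⟩ := (hlim.eventually_le_const hε).exists
  refine ⟨(randomStep (syncMap F) ν)^[n] (μ.prod μ'), ?_, ?_⟩
  · simpa only [iterate_fixed hμ, iterate_fixed hμ'] using
      (isCoupling_prod (μ := μ) (μ' := μ')).randomStep_iterate hF (ν := ν) n
  · calc _ ≤ (randomStep (syncMap F) ν)^[n] (μ.prod μ') {p | ε ≤ V p} :=
          measure_mono fun p hp => le_trans hp (hdist p)
      _ ≤ μ.prod μ' {p | ε ≤ r ^ n * V p} :=
          measure_randomStep_iterate_le (measurable_uncurry_syncMap hF) hV hr₀ hFV ε n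
      _ ≤ ENNReal.ofReal ε := hn

end Uniqueness

theorem W2sq_le_integral [AddGroup S] {c : S → ℝ} {π : Measure (S × S)} (hπ : IsCoupling π μ μ')
    (hint : Integrable (fun p => c (p.1 - p.2) ^ 2) π) :
    W2sq c μ μ' ≤ ∫ p, c (p.1 - p.2) ^ 2 ∂π := by
  refine csInf_le ⟨0, ?_⟩ ⟨π, hπ, hint, rfl⟩
  rintro _ ⟨π', -, -, rfl⟩
  exact integral_nonneg fun p => sq_nonneg _

theorem W2sq_randomStep_iterate_le [AddGroup S] {c : S → ℝ}
    (hcm : Measurable fun p : S × S => c (p.1 - p.2)) (hc₀ : ∀ x, 0 ≤ c x)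
    (hF : Measurable (uncurry F)) {r : ℝ} (hr : 0 ≤ r)
    (hFc : ∀ x y w, c (F x w - F y w) ≤ r * c (x - y)) [IsProbabilityMeasure ν]
    {π : Measure (S × S)} [SFinite π] (hπ : IsCoupling π μ μ')
    (hint : Integrable (fun p => c (p.1 - p.2) ^ 2) π) (n : ℕ) :
    W2sq c ((randomStep F ν)^[n] μ) ((randomStep F ν)^[n] μ') ≤
      (r ^ n) ^ 2 * ∫ p, c (p.1 - p.2) ^ 2 ∂π := by
  have hφ : Monotone fun t => ENNReal.ofReal t ^ 2 := fun s t hst =>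
    pow_le_pow_left' (ENNReal.ofReal_le_ofReal hst) 2
  have hle : ∫⁻ p, ENNReal.ofReal (c (p.1 - p.2) ^ 2) ∂(randomStep (syncMap F) ν)^[n] π ≤
      ∫⁻ p, ENNReal.ofReal ((r ^ n) ^ 2 * c (p.1 - p.2) ^ 2) ∂π := by
    simpa only [← ENNReal.ofReal_pow, hc₀, mul_nonneg, pow_nonneg hr n, mul_pow] using
      lintegral_randomStep_iterate_le (measurable_uncurry_syncMap hF) hcm hφ hr
        (fun p w => hFc p.1 p.2 w) n
  have hint_r := hint.const_mul ((r ^ n) ^ 2)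
  have hint_n : Integrable (fun p => c (p.1 - p.2) ^ 2) ((randomStep (syncMap F) ν)^[n] π) :=
    ⟨(hcm.pow_const 2).aestronglyMeasurable, (hasFiniteIntegral_iff_ofReal
      (ae_of_all _ fun p => sq_nonneg _)).2 (hle.trans_lt hint_r.lintegral_lt_top)⟩
  refine (W2sq_le_integral (hπ.randomStep_iterate hF n) hint_n).trans ?_
  rw [← integral_const_mul]
  refine (ENNReal.ofReal_le_ofReal_iff (integral_nonneg fun p => by positivity)).1 ?_
  rwa [ofReal_integral_eq_lintegral_ofReal hint_n (ae_of_all _ fun p => sq_nonneg _),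
    ofReal_integral_eq_lintegral_ofReal hint_r (ae_of_all _ fun p => by positivity)]

section StationarySolution

variable {Ω : Type*} [MeasurableSpace Ω] {P : Measure Ω} {s : Ω → Ω} {w : Ω → W}

theorem measurePreserving_shift_prodMk_eval_zero (ν : Measure W) [IsProbabilityMeasure ν] :
    MeasurePreserving (fun ω : ℕ → W => (fun n => ω (n + 1), ω 0))
      (Measure.infinitePi fun _ => ν) ((Measure.infinitePi fun _ => ν).prod ν) := by
  have hiIndep : iIndepFun (fun n (ω : ℕ → W) => ω n) (Measure.infinitePi fun _ => ν) :=
    iIndepFun_infinitePi (X := fun _ w => w) fun _ => measurable_id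
  have hshift : Measurable fun (ω : ℕ → W) n => ω (n + 1) := by fun_prop
  have hindep : IndepFun (fun (ω : ℕ → W) n => ω (n + 1)) (fun ω => ω 0)
      (Measure.infinitePi fun _ => ν) := by
    refine IndepFun.process_indepFun (fun n => measurable_pi_apply _) (measurable_pi_apply _)
      fun I => ?_
    have hdisj : Disjoint (I.map ⟨Nat.succ, Nat.succ_injective⟩) {0} := by
      simp only [Finset.disjoint_singleton_right, Finset.mem_map, Function.Embedding.coeFn_mk,
        Nat.succ_ne_zero, and_false, exists_false, not_false_eq_true]
    have heval : Measurable fun x : ({0} : Finset ℕ) → W => x ⟨0, Finset.mem_singleton_self 0⟩ :=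
      measurable_pi_apply _
    exact (hiIndep.indepFun_finset _ _ hdisj measurable_pi_apply).comp
      (φ := fun x (i : I) => x ⟨i.1 + 1, Finset.mem_map_of_mem _ i.2⟩) (by fun_prop) heval
  refine ⟨by fun_prop, ?_⟩
  rw [hindep.map_prod_eq_prod_map_map hshift.aemeasurable (measurable_pi_apply 0).aemeasurable,
    Measure.map_infinitePi_infinitePi_of_inj Nat.succ_injective, Measure.infinitePi_map_eval]

theorem exists_isFixedPt_of_contracting_of_equivalent_edist {X : Type*} [MetricSpace X]
    [CompleteSpace X] [Nonempty X] {f : X → X} {D : X → X → ℝ≥0∞} {k K r : ℝ≥0} (hr : r < 1)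
    (hk : ∀ x y, edist x y ≤ k * D x y) (hK : ∀ x y, D x y ≤ K * edist x y)
    (hf : ∀ x y, D (f x) (f y) ≤ r * D x y) : ∃ x, IsFixedPt f x := by
  have hiter : ∀ n x y, D (f^[n] x) (f^[n] y) ≤ r ^ n * D x y := fun n x y => by
    induction n generalizing x y with
    | zero => simp only [iterate_zero, id_eq, pow_zero, one_mul, le_refl]
    | succ n ih =>
      calc D (f^[n] (f x)) (f^[n] (f y)) ≤ r ^ n * D (f x) (f y) := ih _ _
        _ ≤ r ^ n * (r * D x y) := by gcongr; exact hf x y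
        _ = r ^ (n + 1) * D x y := by rw [pow_succ, mul_assoc]
  have hlip : ∀ n, LipschitzWith (k * r ^ n * K) f^[n] := fun n x y => by
    calc edist (f^[n] x) (f^[n] y) ≤ k * (r ^ n * (K * edist x y)) := by
          refine (hk _ _).trans ?_
          gcongr
          refine (hiter n x y).trans ?_
          gcongr
          exact hK x y
      _ = (k * r ^ n * K : ℝ≥0) * edist x y := by push_cast; ring
  have hlim : Tendsto (fun n => k * r ^ n * K) atTop (𝓝 0) := by
    simpa only [mul_zero, zero_mul] using
      ((NNReal.tendsto_pow_atTop_nhds_zero_of_lt_one hr).const_mul k).mul_const K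
  obtain ⟨n, hn⟩ := (hlim.eventually_lt_const one_pos).exists
  exact ⟨_, ContractingWith.isFixedPt_fixedPoint_iterate ⟨hn, hlip n⟩⟩

/-- The action of the iteration `F` on random variables: the previous state is `X` seen through the
shift `s` and `w` is the new noise. -/
def noiseStep (F : S → W → S) (s : Ω → Ω) (w : Ω → W) (X : Ω → S) (ω : Ω) : S :=
  F (X (s ω)) (w ω)

theorem map_noiseStep (hF : Measurable (uncurry F))
    (hsw : MeasurePreserving (fun ω => (s ω, w ω)) P (P.prod ν)) {X : Ω → S} (hX : Measurable X)
    [SFinite P] [SFinite ν] : P.map (noiseStep F s w X) = randomStep F ν (P.map X) := by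
  have hprod : (P.map X).prod ν = (P.prod ν).map (Prod.map X id) := by
    conv_lhs => rw [← Measure.map_id (μ := ν)]
    exact Measure.map_prod_map P ν hX measurable_id
  have hXid : Measurable (Prod.map X (id : W → W)) := hX.prodMap measurable_id
  rw [randomStep, hprod, Measure.map_map hF hXid, ← hsw.map_eq,
    Measure.map_map (hF.comp hXid) hsw.measurable]
  rfl

theorem measurePreserving_of_prodMk_left [IsProbabilityMeasure ν]
    (hsw : MeasurePreserving (fun ω => (s ω, w ω)) P (P.prod ν)) : MeasurePreserving s P P :=
  measurePreserving_fst.comp hsw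

theorem measurePreserving_of_prodMk_right [IsProbabilityMeasure P] [SFinite ν]
    (hsw : MeasurePreserving (fun ω => (s ω, w ω)) P (P.prod ν)) : MeasurePreserving w P ν :=
  measurePreserving_snd.comp hsw

theorem eLpNorm_noiseStep_sub_le {E N : Type*} [NormedAddCommGroup E] [NormedSpace ℝ E]
    {F : E → N → E} {w : Ω → N} {c : Seminorm ℝ E} {r : ℝ≥0} {q : ℝ≥0∞}
    (hs : MeasurePreserving s P P) (hc : Continuous c)
    (hFc : ∀ x y w, c (F x w - F y w) ≤ r * c (x - y)) {X Y : Ω → E}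
    (hX : AEStronglyMeasurable X P) (hY : AEStronglyMeasurable Y P) :
    eLpNorm (fun ω => c (noiseStep F s w X ω - noiseStep F s w Y ω)) q P ≤
      r * eLpNorm (fun ω => c (X ω - Y ω)) q P := by
  have hXY : AEStronglyMeasurable (fun ω => c (X ω - Y ω)) P :=
    hc.comp_aestronglyMeasurable (hX.sub hY)
  rw [← eLpNorm_comp_measurePreserving hXY hs, ← ENNReal.ofReal_coe_nnreal]
  refine eLpNorm_le_mul_eLpNorm_of_ae_le_mul (ae_of_all _ fun ω => ?_) q
  simpa only [comp_apply, noiseStep, Real.norm_of_nonneg (apply_nonneg c _)] using hFc _ _ _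

section Contraction

variable {E : Type*} [NormedAddCommGroup E] [NormedSpace ℝ E] [MeasurableSpace E] [BorelSpace E]
  [SecondCountableTopology E] [IsProbabilityMeasure P] [IsProbabilityMeasure ν] {F : E → W → E}
  {c : Seminorm ℝ E} {k K r : ℝ≥0} {q : ℝ≥0∞}

theorem memLp_noiseStep (hsw : MeasurePreserving (fun ω => (s ω, w ω)) P (P.prod ν))
    (hF : Measurable (uncurry F)) (hk : ∀ x, ‖x‖ ≤ k * c x) (hK : ∀ x, c x ≤ K * ‖x‖)
    (hFc : ∀ x y w, c (F x w - F y w) ≤ r * c (x - y)) (hF0 : MemLp (F 0) q ν)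
    {X : Ω → E} (hX : MemLp X q P) : MemLp (noiseStep F s w X) q P := by
  have hs := measurePreserving_of_prodMk_left hsw
  have hw := measurePreserving_of_prodMk_right hsw
  have hXs : MemLp (fun ω => X (s ω)) q P := hX.comp_measurePreserving hs
  have hF0w : MemLp (fun ω => F 0 (w ω)) q P := hF0.comp_measurePreserving hw
  have hmeas : AEStronglyMeasurable (noiseStep F s w X) P :=
    (hF.comp_aemeasurable (hXs.aemeasurable.prodMk hw.aemeasurable)).aestronglyMeasurable
  have hle : ∀ x w, ‖F x w - F 0 w‖ ≤ k * (r * K) * ‖x‖ := fun x w =>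
    calc ‖F x w - F 0 w‖ ≤ k * (r * c (x - 0)) :=
          (hk _).trans (mul_le_mul_of_nonneg_left (hFc x 0 w) k.coe_nonneg)
      _ ≤ k * (r * (K * ‖x‖)) := by rw [sub_zero]; gcongr; exact hK x
      _ = k * (r * K) * ‖x‖ := by ring
  have hdiff : MemLp (fun ω => noiseStep F s w X ω - F 0 (w ω)) q P :=
    hXs.of_le_mul (hmeas.sub hF0w.aestronglyMeasurable) (ae_of_all _ fun ω => hle _ _)
  exact (hdiff.add hF0w).ae_eq (ae_of_all _ fun ω => sub_add_cancel _ _)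

theorem exists_memLp_noiseStep_ae_eq [CompleteSpace E] [Fact (1 ≤ q)]
    (hsw : MeasurePreserving (fun ω => (s ω, w ω)) P (P.prod ν))
    (hF : Measurable (uncurry F)) (hk : ∀ x, ‖x‖ ≤ k * c x) (hK : ∀ x, c x ≤ K * ‖x‖)
    (hFc : ∀ x y w, c (F x w - F y w) ≤ r * c (x - y)) (hr : r < 1) (hF0 : MemLp (F 0) q ν) :
    ∃ X : Ω → E, Measurable X ∧ MemLp X q P ∧ noiseStep F s w X =ᵐ[P] X := by
  have hmem : ∀ X : Lp E q P, MemLp (noiseStep F s w X) q P := fun X =>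
    memLp_noiseStep hsw hF hk hK hFc hF0 (Lp.memLp X)
  let f : Lp E q P → Lp E q P := fun X => (hmem X).toLp
  have hf : ∀ X Y, eLpNorm (fun ω => c (f X ω - f Y ω)) q P ≤
      r * eLpNorm (fun ω => c (X ω - Y ω)) q P := fun X Y => by
    refine le_trans (eLpNorm_congr_ae ?_).le <| eLpNorm_noiseStep_sub_le
      (measurePreserving_of_prodMk_left hsw) (continuous_of_le_norm hK) hFc (w := w)
      (Lp.aestronglyMeasurable X) (Lp.aestronglyMeasurable Y)
    filter_upwards [(hmem X).coeFn_toLp, (hmem Y).coeFn_toLp] with ω hX hY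
    rw [hX, hY]
  obtain ⟨X, hX⟩ : ∃ X, IsFixedPt f X := by
    refine exists_isFixedPt_of_contracting_of_equivalent_edist (k := k) (K := K) hr
      (fun X Y => ?_) (fun X Y => ?_) hf
    · rw [Lp.edist_def, ← ENNReal.ofReal_coe_nnreal]
      refine eLpNorm_le_mul_eLpNorm_of_ae_le_mul (ae_of_all _ fun ω => ?_) q
      simpa only [Pi.sub_apply, Real.norm_of_nonneg (apply_nonneg c _)] using hk _
    · rw [Lp.edist_def, ← ENNReal.ofReal_coe_nnreal]
      refine eLpNorm_le_mul_eLpNorm_of_ae_le_mul (ae_of_all _ fun ω => ?_) q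
      simpa only [Pi.sub_apply, Real.norm_of_nonneg (apply_nonneg c _)] using hK _
  refine ⟨X, (Lp.stronglyMeasurable X).measurable, Lp.memLp X, (hmem X).coeFn_toLp.symm.trans ?_⟩
  rw [show (hmem X).toLp = X from hX]

end Contraction

end StationarySolution

end RandomIteration

theorem integral_le_of_ae_le_comp {Ω : Type*} [MeasurableSpace Ω] {P : Measure Ω} {s : Ω → Ω}
    (hs : MeasurePreserving s P P) {f g : Ω → ℝ} (hf : Integrable f P) (hg : Integrable g P)
    {r : ℝ} (hr : r < 1) (hle : ∀ᵐ ω ∂P, f ω ≤ r * f (s ω) + (1 - r) * g (s ω)) :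
    ∫ ω, f ω ∂P ≤ ∫ ω, g ω ∂P := by
  have hsum : Integrable (fun ω => r * f ω + (1 - r) * g ω) P :=
    (hf.const_mul r).add (hg.const_mul (1 - r))
  have hmono : ∫ ω, f ω ∂P ≤ r * ∫ ω, f ω ∂P + (1 - r) * ∫ ω, g ω ∂P :=
    calc ∫ ω, f ω ∂P ≤ ∫ ω, (r * f (s ω) + (1 - r) * g (s ω)) ∂P :=
          integral_mono_ae hf (hs.integrable_comp_of_integrable hsum) hle
      _ = ∫ ω, (r * f ω + (1 - r) * g ω) ∂P :=
          hs.hasLaw.integral_comp hsum.aestronglyMeasurable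
      _ = r * ∫ ω, f ω ∂P + (1 - r) * ∫ ω, g ω ∂P := by
          rw [integral_add (hf.const_mul r) (hg.const_mul (1 - r)), integral_const_mul,
            integral_const_mul]
  have hdiff : (1 - r) * ∫ ω, f ω ∂P ≤ (1 - r) * ∫ ω, g ω ∂P := by linarith
  exact le_of_mul_le_mul_left hdiff (sub_pos.2 hr)

theorem integral_norm_add_sq_prod {X Y E : Type*} [MeasurableSpace X] [MeasurableSpace Y]
    [NormedAddCommGroup E] [InnerProductSpace ℝ E] [CompleteSpace E] {μ : Measure X}
    {ν : Measure Y} [IsProbabilityMeasure μ] [IsProbabilityMeasure ν] {f : X → E} {g : Y → E}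
    (hf : MemLp f 2 μ) (hg : MemLp g 2 ν) (hg₀ : ∫ y, g y ∂ν = 0) :
    ∫ p, ‖f p.1 + g p.2‖ ^ 2 ∂μ.prod ν = ∫ x, ‖f x‖ ^ 2 ∂μ + ∫ y, ‖g y‖ ^ 2 ∂ν := by
  have hf₁ : Integrable f μ := hf.integrable one_le_two
  have hg₁ : Integrable g ν := hg.integrable one_le_two
  have hf₂ : Integrable (fun p : X × Y => ‖f p.1‖ ^ 2) (μ.prod ν) :=
    (hf.integrable_norm_pow two_ne_zero).comp_fst ν
  have hg₂ : Integrable (fun p : X × Y => ‖g p.2‖ ^ 2) (μ.prod ν) :=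
    (hg.integrable_norm_pow two_ne_zero).comp_snd μ
  have hinner : Integrable (fun p : X × Y => 2 * inner ℝ (f p.1) (g p.2)) (μ.prod ν) :=
    (hf₁.op_fst_snd (op := fun x y => inner ℝ x y) (by fun_prop)
      ⟨1, fun x y => by simpa only [one_mul] using norm_inner_le_norm x y⟩ hg₁).const_mul 2
  have hcross : ∫ p, inner ℝ (f p.1) (g p.2) ∂μ.prod ν = 0 :=
    (integral_prod_bilin (innerSL ℝ) hf₁ hg₁).trans (by rw [hg₀, map_zero])
  simp_rw [norm_add_sq_real]
  rw [integral_add (by exact hf₂.add hinner) hg₂, integral_add hf₂ hinner, integral_const_mul,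
    hcross, mul_zero, add_zero, integral_fun_fst fun x => ‖f x‖ ^ 2,
    integral_fun_snd fun y => ‖g y‖ ^ 2]
  simp only [probReal_univ, one_smul]

section StochasticApproximation

/-- The stochastic approximation update of the state `x` with noise `w`. For `T = 0` the iteration
is the exponential moving average of the noise. -/
def saMap {E : Type*} [AddCommGroup E] [Module ℝ E] (T : E → E) (α : ℝ) (x w : E) : E :=
  x + α • (T x - x + w)

section Seminorm

variable {E : Type*} [AddCommGroup E] [Module ℝ E] {c : Seminorm ℝ E} {T : E → E} {γ α : ℝ}

theorem saMap_factor_nonneg (hγ : 0 ≤ γ) (hα : α ∈ Set.Icc 0 1) : 0 ≤ 1 - α * (1 - γ) := by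
  nlinarith [hα.1, hα.2, mul_nonneg hα.1 hγ]

theorem saMap_factor_lt_one (hγ : γ < 1) (hα : 0 < α) : 1 - α * (1 - γ) < 1 :=
  sub_lt_self 1 (mul_pos hα (sub_pos.2 hγ))

theorem seminorm_saMap_sub_le (hT : ∀ x y, c (T x - T y) ≤ γ * c (x - y))
    (hα : α ∈ Set.Icc 0 1) (x y w : E) :
    c (saMap T α x w - saMap T α y w) ≤ (1 - α * (1 - γ)) * c (x - y) :=
  calc c (saMap T α x w - saMap T α y w) = c ((1 - α) • (x - y) + α • (T x - T y)) :=
        congrArg c (by simp only [saMap]; module)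
    _ ≤ (1 - α) * c (x - y) + α * c (T x - T y) := by
        refine (map_add_le_add c _ _).trans_eq ?_
        rw [map_smul_eq_mul, map_smul_eq_mul, Real.norm_of_nonneg hα.1,
          Real.norm_of_nonneg (sub_nonneg.2 hα.2)]
    _ ≤ (1 - α) * c (x - y) + α * (γ * c (x - y)) := by
        gcongr
        exacts [hα.1, hT x y]
    _ = (1 - α * (1 - γ)) * c (x - y) := by ring

theorem seminorm_saMap_sub_movingAverage_sq_le (hγ : γ ∈ Set.Ico 0 1)
    (hT : ∀ x y, c (T x - T y) ≤ γ * c (x - y)) {a : E} (ha : T a = a) (hα : α ∈ Set.Icc 0 1)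
    (x y w : E) :
    c (saMap T α x w - a - saMap 0 α y w) ^ 2 ≤ (1 - α * (1 - γ)) * c (x - a - y) ^ 2 +
      (1 - (1 - α * (1 - γ))) * (γ / (1 - γ) * c y) ^ 2 := by
  have hγ' : 0 < 1 - γ := sub_pos.2 hγ.2
  set u := c (x - a - y)
  set v := γ / (1 - γ) * c y
  have hv : (1 - γ) * v = γ * c y := by rw [← mul_assoc, mul_div_cancel₀ _ hγ'.ne']
  have hTx : c (T x - T a) ≤ γ * (u + c y) :=
    (hT x a).trans <| mul_le_mul_of_nonneg_left
      (by simpa only [sub_add_cancel] using map_add_le_add c (x - a - y) y) hγ.1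
  have hlin : c (saMap T α x w - a - saMap 0 α y w) ≤
      (1 - α * (1 - γ)) * u + (1 - (1 - α * (1 - γ))) * v :=
    calc c (saMap T α x w - a - saMap 0 α y w)
        = c ((1 - α) • (x - a - y) + α • (T x - T a)) :=
          congrArg c (by simp only [saMap, ha, Pi.zero_apply]; module)
      _ ≤ (1 - α) * u + α * c (T x - T a) := by
          refine (map_add_le_add c _ _).trans_eq ?_
          rw [map_smul_eq_mul, map_smul_eq_mul, Real.norm_of_nonneg hα.1,
            Real.norm_of_nonneg (sub_nonneg.2 hα.2)]
      _ ≤ (1 - α) * u + α * (γ * (u + c y)) := by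
          gcongr
          exact hα.1
      _ = (1 - α * (1 - γ)) * u + (1 - (1 - α * (1 - γ))) * v := by
          linear_combination (-α) * hv
  calc c (saMap T α x w - a - saMap 0 α y w) ^ 2
      ≤ ((1 - α * (1 - γ)) * u + (1 - (1 - α * (1 - γ))) * v) ^ 2 := by gcongr
    _ ≤ (1 - α * (1 - γ)) * u ^ 2 + (1 - (1 - α * (1 - γ))) * v ^ 2 :=
        (convexOn_pow 2).2 (apply_nonneg c _)
          (mul_nonneg (div_nonneg hγ.1 hγ'.le) (apply_nonneg c _))
          (saMap_factor_nonneg hγ.1 hα)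
          (sub_nonneg.2 (sub_le_self 1 (mul_nonneg hα.1 hγ'.le))) (add_sub_cancel _ _)

end Seminorm

theorem continuous_of_seminorm_sub_le {E F : Type*} [NormedAddCommGroup E] [NormedSpace ℝ E]
    [NormedAddCommGroup F] [NormedSpace ℝ F] {c : Seminorm ℝ E} {c' : Seminorm ℝ F} {T : E → F}
    {γ K k : ℝ≥0} (hK : ∀ x, c x ≤ K * ‖x‖) (hk : ∀ x, ‖x‖ ≤ k * c' x)
    (hT : ∀ x y, c' (T x - T y) ≤ γ * c (x - y)) : Continuous T := by
  refine (LipschitzWith.of_dist_le_mul (K := k * (γ * K)) fun x y => ?_).continuous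
  rw [dist_eq_norm, dist_eq_norm]
  calc ‖T x - T y‖ ≤ k * (γ * (K * ‖x - y‖)) := by
        refine (hk _).trans ?_
        gcongr
        refine (hT x y).trans ?_
        gcongr
        exact hK _
    _ = (k * (γ * K) : ℝ≥0) * ‖x - y‖ := by push_cast; ring

theorem memLp_saMap_const {E : Type*} [NormedAddCommGroup E] [NormedSpace ℝ E]
    [MeasurableSpace E] {ν : Measure E} [IsFiniteMeasure ν] {q : ℝ≥0∞} (hν : MemLp id q ν)
    (T : E → E) (α : ℝ) (x : E) : MemLp (saMap T α x) q ν :=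
  (memLp_const x).add (((memLp_const (T x - x)).add hν).const_smul α)

section SecondMoment

variable {E : Type*} [NormedAddCommGroup E] [NormedSpace ℝ E] {c : Seminorm ℝ E} {K k : ℝ≥0}
  {T : E → E} {γ α : ℝ} {Ω : Type*} [MeasurableSpace Ω] {P : Measure Ω} [IsFiniteMeasure P]
  {s : Ω → Ω} {w : Ω → E}

theorem integral_seminorm_sub_movingAverage_sq_le (hs : MeasurePreserving s P P)
    (hK : ∀ x, c x ≤ K * ‖x‖) (hγ : γ ∈ Set.Ico 0 1)
    (hT : ∀ x y, c (T x - T y) ≤ γ * c (x - y)) {a : E} (ha : T a = a) (hα : α ∈ Set.Ioc 0 1)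
    {X Y : Ω → E} (hX : MemLp X 2 P) (hY : MemLp Y 2 P)
    (hXeq : noiseStep (saMap T α) s w X =ᵐ[P] X) (hYeq : noiseStep (saMap 0 α) s w Y =ᵐ[P] Y) :
    ∫ ω, c (X ω - a - Y ω) ^ 2 ∂P ≤ (γ / (1 - γ)) ^ 2 * ∫ ω, c (Y ω) ^ 2 ∂P := by
  have hZ : MemLp (fun ω => c (X ω - a - Y ω)) 2 P :=
    memLp_seminorm hK ((hX.sub (memLp_const a)).sub hY)
  have hcY : MemLp (fun ω => γ / (1 - γ) * c (Y ω)) 2 P := (memLp_seminorm hK hY).const_mul _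
  rw [← integral_const_mul]
  simp only [← mul_pow]
  refine integral_le_of_ae_le_comp hs hZ.integrable_sq hcY.integrable_sq
    (saMap_factor_lt_one hγ.2 hα.1) ?_
  filter_upwards [hXeq, hYeq] with ω hXω hYω
  rw [← hXω, ← hYω]
  exact seminorm_saMap_sub_movingAverage_sq_le hγ hT ha (Set.Ioc_subset_Icc_self hα) _ _ _

theorem integral_norm_sub_sq_le_of_noiseStep_ae_eq (hs : MeasurePreserving s P P)
    (hK : ∀ x, c x ≤ K * ‖x‖) (hk : ∀ x, ‖x‖ ≤ k * c x) (hγ : γ ∈ Set.Ico 0 1)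
    (hT : ∀ x y, c (T x - T y) ≤ γ * c (x - y)) {a : E} (ha : T a = a) (hα : α ∈ Set.Ioc 0 1)
    {X Y : Ω → E} (hX : MemLp X 2 P) (hY : MemLp Y 2 P)
    (hXeq : noiseStep (saMap T α) s w X =ᵐ[P] X) (hYeq : noiseStep (saMap 0 α) s w Y =ᵐ[P] Y) :
    ∫ ω, ‖X ω - a‖ ^ 2 ∂P ≤ 2 * (1 + (k * (γ / (1 - γ)) * K) ^ 2) * ∫ ω, ‖Y ω‖ ^ 2 ∂P := by
  have hXa : MemLp (fun ω => X ω - a) 2 P := hX.sub (memLp_const a)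
  have hY₂ : Integrable (fun ω => ‖Y ω‖ ^ 2) P := hY.integrable_norm_pow two_ne_zero
  have hZ₂ : Integrable (fun ω => c (X ω - a - Y ω) ^ 2) P :=
    (memLp_seminorm hK (hXa.sub hY)).integrable_sq
  have htri : ∀ ω, ‖X ω - a‖ ^ 2 ≤ 2 * ‖Y ω‖ ^ 2 + 2 * k ^ 2 * c (X ω - a - Y ω) ^ 2 := fun ω =>
    calc ‖X ω - a‖ ^ 2 ≤ (‖Y ω‖ + k * c (X ω - a - Y ω)) ^ 2 := by
          gcongr
          exact (norm_le_norm_add_norm_sub' _ _).trans (by gcongr; exact hk _)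
      _ ≤ 2 * (‖Y ω‖ ^ 2 + (k * c (X ω - a - Y ω)) ^ 2) := add_sq_le
      _ = 2 * ‖Y ω‖ ^ 2 + 2 * k ^ 2 * c (X ω - a - Y ω) ^ 2 := by ring
  have hcY : ∫ ω, c (Y ω) ^ 2 ∂P ≤ K ^ 2 * ∫ ω, ‖Y ω‖ ^ 2 ∂P := by
    rw [← integral_const_mul]
    refine integral_mono (memLp_seminorm hK hY).integrable_sq (hY₂.const_mul _) fun ω => ?_
    simp only [← mul_pow]
    gcongr
    exact hK _
  calc ∫ ω, ‖X ω - a‖ ^ 2 ∂P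
      ≤ ∫ ω, (2 * ‖Y ω‖ ^ 2 + 2 * k ^ 2 * c (X ω - a - Y ω) ^ 2) ∂P :=
        integral_mono (hXa.integrable_norm_pow two_ne_zero)
          ((hY₂.const_mul _).add (hZ₂.const_mul _)) htri
    _ = 2 * ∫ ω, ‖Y ω‖ ^ 2 ∂P + 2 * k ^ 2 * ∫ ω, c (X ω - a - Y ω) ^ 2 ∂P := by
        rw [integral_add (hY₂.const_mul _) (hZ₂.const_mul _), integral_const_mul,
          integral_const_mul]
    _ ≤ 2 * ∫ ω, ‖Y ω‖ ^ 2 ∂P +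
          2 * k ^ 2 * ((γ / (1 - γ)) ^ 2 * (K ^ 2 * ∫ ω, ‖Y ω‖ ^ 2 ∂P)) := by
        gcongr
        refine (integral_seminorm_sub_movingAverage_sq_le hs hK hγ hT ha hα hX hY hXeq
          hYeq).trans ?_
        gcongr
    _ = 2 * (1 + (k * (γ / (1 - γ)) * K) ^ 2) * ∫ ω, ‖Y ω‖ ^ 2 ∂P := by ring

theorem integral_seminorm_sub_sq_prod_le [MeasurableSpace E] (hK : ∀ x, c x ≤ K * ‖x‖)
    {μ μ' : Measure E} [IsProbabilityMeasure μ] [IsProbabilityMeasure μ'] (hμ : MemLp id 2 μ)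
    (hμ' : MemLp id 2 μ') (a : E) :
    ∫ p, c (p.1 - p.2) ^ 2 ∂μ.prod μ' ≤
      2 * K ^ 2 * (∫ x, ‖x - a‖ ^ 2 ∂μ + ∫ x, ‖x - a‖ ^ 2 ∂μ') := by
  have hint : ∀ {m : Measure E} [IsProbabilityMeasure m], MemLp id 2 m →
      Integrable (fun x => ‖x - a‖ ^ 2) m := fun hm =>
    (hm.sub (memLp_const a)).integrable_norm_pow two_ne_zero
  have hfst := (hint hμ).comp_fst μ'
  have hsnd := (hint hμ').comp_snd μ
  have htri : ∀ x y, c (x - y) ^ 2 ≤ 2 * K ^ 2 * (‖x - a‖ ^ 2 + ‖y - a‖ ^ 2) := fun x y =>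
    calc c (x - y) ^ 2 ≤ (K * (‖x - a‖ + ‖y - a‖)) ^ 2 := by
          gcongr
          refine (hK _).trans ?_
          gcongr
          rw [← sub_sub_sub_cancel_right x y a]
          exact norm_sub_le _ _
      _ = K ^ 2 * (‖x - a‖ + ‖y - a‖) ^ 2 := mul_pow _ _ _
      _ ≤ K ^ 2 * (2 * (‖x - a‖ ^ 2 + ‖y - a‖ ^ 2)) := by
          gcongr
          exact add_sq_le
      _ = 2 * K ^ 2 * (‖x - a‖ ^ 2 + ‖y - a‖ ^ 2) := by ring
  calc ∫ p, c (p.1 - p.2) ^ 2 ∂μ.prod μ'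
      ≤ ∫ p, 2 * K ^ 2 * (‖p.1 - a‖ ^ 2 + ‖p.2 - a‖ ^ 2) ∂μ.prod μ' :=
        integral_mono_of_nonneg (ae_of_all _ fun p => sq_nonneg _)
          ((hfst.add hsnd).const_mul _) (ae_of_all _ fun p => htri p.1 p.2)
    _ = 2 * K ^ 2 * (∫ x, ‖x - a‖ ^ 2 ∂μ + ∫ x, ‖x - a‖ ^ 2 ∂μ') := by
        rw [integral_const_mul, integral_add hfst hsnd, integral_fun_fst fun x => ‖x - a‖ ^ 2,
          integral_fun_snd fun x => ‖x - a‖ ^ 2]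
        simp only [probReal_univ, one_smul]

end SecondMoment

variable {E : Type*} [NormedAddCommGroup E] [MeasurableSpace E] [BorelSpace E]
  [SecondCountableTopology E]

theorem measurable_uncurry_saMap [NormedSpace ℝ E] {T : E → E} (hT : Measurable T) (α : ℝ) :
    Measurable (uncurry (saMap T α)) := by
  unfold saMap uncurry
  fun_prop

section Contraction

variable [NormedSpace ℝ E] {c : Seminorm ℝ E} {K k : ℝ≥0} {T : E → E} {γ α : ℝ} {q : ℝ≥0∞}
  {Ω : Type*} [MeasurableSpace Ω] {P : Measure Ω} [IsProbabilityMeasure P] {s : Ω → Ω} {w : Ω → E}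
  {ν : Measure E} [IsProbabilityMeasure ν]

theorem exists_memLp_noiseStep_saMap_ae_eq [CompleteSpace E] [Fact (1 ≤ q)]
    (hsw : MeasurePreserving (fun ω => (s ω, w ω)) P (P.prod ν)) (hν : MemLp id q ν)
    (hK : ∀ x, c x ≤ K * ‖x‖) (hk : ∀ x, ‖x‖ ≤ k * c x) (hγ : γ ∈ Set.Ico 0 1)
    (hT : ∀ x y, c (T x - T y) ≤ γ * c (x - y)) (hα : α ∈ Set.Ioc 0 1) :
    ∃ X : Ω → E, Measurable X ∧ MemLp X q P ∧ noiseStep (saMap T α) s w X =ᵐ[P] X := by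
  have hα' : α ∈ Set.Icc 0 1 := Set.Ioc_subset_Icc_self hα
  have hTm : Measurable T :=
    (continuous_of_seminorm_sub_le (γ := ⟨γ, hγ.1⟩) hK hk hT).measurable
  exact exists_memLp_noiseStep_ae_eq (r := ⟨1 - α * (1 - γ), saMap_factor_nonneg hγ.1 hα'⟩) hsw
    (measurable_uncurry_saMap hTm α) hk hK (seminorm_saMap_sub_le hT hα')
    (saMap_factor_lt_one hγ.2 hα.1) (memLp_saMap_const hν T α 0)

theorem eq_of_randomStep_saMap_eq (hK : ∀ x, c x ≤ K * ‖x‖) (hk : ∀ x, ‖x‖ ≤ k * c x)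
    (hγ : γ ∈ Set.Ico 0 1) (hT : ∀ x y, c (T x - T y) ≤ γ * c (x - y)) (hα : α ∈ Set.Ioc 0 1)
    {μ μ' : Measure E} [IsProbabilityMeasure μ] [IsProbabilityMeasure μ']
    (hμ : randomStep (saMap T α) ν μ = μ) (hμ' : randomStep (saMap T α) ν μ' = μ') : μ = μ' := by
  have hα' : α ∈ Set.Icc 0 1 := Set.Ioc_subset_Icc_self hα
  have hTm : Measurable T :=
    (continuous_of_seminorm_sub_le (γ := ⟨γ, hγ.1⟩) hK hk hT).measurable
  have hV : Measurable fun p : E × E => (k : ℝ) * c (p.1 - p.2) :=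
    ((continuous_of_le_norm hK).measurable.comp (by fun_prop)).const_mul _
  refine eq_of_randomStep_eq (measurable_uncurry_saMap hTm α) hV
    (fun p => (dist_eq_norm p.1 p.2).trans_le (hk _)) (saMap_factor_nonneg hγ.1 hα')
    (saMap_factor_lt_one hγ.2 hα.1) (fun p w => ?_) hμ hμ'
  rw [mul_left_comm]
  exact mul_le_mul_of_nonneg_left (seminorm_saMap_sub_le hT hα' p.1 p.2 w) k.coe_nonneg

theorem W2sq_randomStep_saMap_iterate_le (hK : ∀ x, c x ≤ K * ‖x‖) (hk : ∀ x, ‖x‖ ≤ k * c x)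
    (hγ : γ ∈ Set.Ico 0 1) (hT : ∀ x y, c (T x - T y) ≤ γ * c (x - y)) (hα : α ∈ Set.Icc 0 1)
    {μ μ' : Measure E} [IsProbabilityMeasure μ] [IsProbabilityMeasure μ'] (hμ : MemLp id 2 μ)
    (hμ' : MemLp id 2 μ') (n : ℕ) :
    W2sq c ((randomStep (saMap T α) ν)^[n] μ) ((randomStep (saMap T α) ν)^[n] μ') ≤
      ((1 - α * (1 - γ)) ^ n) ^ 2 * ∫ p, c (p.1 - p.2) ^ 2 ∂μ.prod μ' := by
  have hTm : Measurable T :=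
    (continuous_of_seminorm_sub_le (γ := ⟨γ, hγ.1⟩) hK hk hT).measurable
  have hdiff : MemLp (fun p : E × E => p.1 - p.2) 2 (μ.prod μ') :=
    (hμ.comp_fst μ').sub (hμ'.comp_snd μ)
  exact W2sq_randomStep_iterate_le ((continuous_of_le_norm hK).measurable.comp (by fun_prop))
    (apply_nonneg c) (measurable_uncurry_saMap hTm α) (saMap_factor_nonneg hγ.1 hα)
    (seminorm_saMap_sub_le hT hα) isCoupling_prod (memLp_seminorm hK hdiff).integrable_sq n

end Contraction

section Wasserstein

variable [NormedSpace ℝ E] {c : Seminorm ℝ E} {K k : ℝ≥0} {T : E → E} {γ : ℝ} {ν : Measure E}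
  [IsProbabilityMeasure ν]

theorem saMap_factor_pow_sq_le {γ α : ℝ} (hγ : γ ∈ Set.Icc 0 1) (hα : α ∈ Set.Icc 0 1) (n : ℕ) :
    ((1 - α * (1 - γ)) ^ n) ^ 2 ≤ (1 - α * (1 - √γ)) ^ n := by
  have hr₀ := saMap_factor_nonneg hγ.1 hα
  have hr₁ : 1 - α * (1 - γ) ≤ 1 := sub_le_self 1 (mul_nonneg hα.1 (sub_nonneg.2 hγ.2))
  have hsqrt : γ ≤ √γ := Real.le_sqrt_of_sq_le (sq_le hγ.1 hγ.2)
  rw [pow_right_comm]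
  refine pow_le_pow_left₀ (sq_nonneg _) ((pow_le_of_le_one hr₀ hr₁ two_ne_zero).trans ?_) n
  gcongr
  exact hα.1

theorem exists_W2sq_randomStep_saMap_iterate_le (hK : ∀ x, c x ≤ K * ‖x‖)
    (hk : ∀ x, ‖x‖ ≤ k * c x) (hγ : γ ∈ Set.Ico 0 1) (hT : ∀ x y, c (T x - T y) ≤ γ * c (x - y))
    {μstat : ℝ → Measure E} (hprob : ∀ α ∈ Set.Ioc 0 1, IsProbabilityMeasure (μstat α))
    (hmem : ∀ α ∈ Set.Ioc 0 1, MemLp id 2 (μstat α))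
    (hinv : ∀ α ∈ Set.Ioc 0 1, randomStep (saMap T α) ν (μstat α) = μstat α) {a : E} {M : ℝ}
    (hM : ∀ α ∈ Set.Ioc 0 1, ∫ x, ‖x - a‖ ^ 2 ∂μstat α ≤ M) {μ₀ : Measure E}
    [IsProbabilityMeasure μ₀] (hμ₀ : MemLp id 2 μ₀) :
    ∃ C > 0, ∀ α ∈ Set.Ioc (0 : ℝ) 1, ∀ t : ℕ,
      W2sq c ((randomStep (saMap T α) ν)^[t] μ₀) (μstat α) ≤ C * (1 - α * (1 - √γ)) ^ t := by
  refine ⟨max 1 (2 * K ^ 2 * (∫ x, ‖x - a‖ ^ 2 ∂μ₀ + M)), by positivity, fun α hα t => ?_⟩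
  have hα' : α ∈ Set.Icc 0 1 := Set.Ioc_subset_Icc_self hα
  have := hprob α hα
  calc W2sq c ((randomStep (saMap T α) ν)^[t] μ₀) (μstat α)
      = W2sq c ((randomStep (saMap T α) ν)^[t] μ₀) ((randomStep (saMap T α) ν)^[t] (μstat α)) := by
        rw [iterate_fixed (hinv α hα)]
    _ ≤ ((1 - α * (1 - γ)) ^ t) ^ 2 * ∫ p, c (p.1 - p.2) ^ 2 ∂μ₀.prod (μstat α) :=
        W2sq_randomStep_saMap_iterate_le hK hk hγ hT hα' hμ₀ (hmem α hα) t
    _ ≤ (1 - α * (1 - √γ)) ^ t * max 1 (2 * K ^ 2 * (∫ x, ‖x - a‖ ^ 2 ∂μ₀ + M)) := by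
        have hrate := saMap_factor_pow_sq_le (Set.Ico_subset_Icc_self hγ) hα' t
        refine mul_le_mul hrate (le_max_of_le_right ?_) (integral_nonneg fun p => sq_nonneg _)
          ((sq_nonneg _).trans hrate)
        refine (integral_seminorm_sub_sq_prod_le hK hμ₀ (hmem α hα) a).trans ?_
        gcongr
        exact hM α hα
    _ = max 1 (2 * K ^ 2 * (∫ x, ‖x - a‖ ^ 2 ∂μ₀ + M)) * (1 - α * (1 - √γ)) ^ t := mul_comm _ _

end Wasserstein

variable [InnerProductSpace ℝ E] [CompleteSpace E] {ν : Measure E} [IsProbabilityMeasure ν]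

theorem integral_norm_sq_le_of_randomStep_movingAverage_eq {μ : Measure E} [IsProbabilityMeasure μ]
    (hμ : MemLp id 2 μ) (hν : MemLp id 2 ν) (hmean : ∫ x, x ∂ν = 0) {α : ℝ} (hα : α ∈ Set.Ioc 0 1)
    (hinv : randomStep (saMap 0 α) ν μ = μ) : ∫ x, ‖x‖ ^ 2 ∂μ ≤ α * ∫ x, ‖x‖ ^ 2 ∂ν := by
  have hsplit : ∀ p : E × E, saMap 0 α p.1 p.2 = ((1 - α) • id) p.1 + (α • id) p.2 := fun p => by
    simp only [saMap, Pi.zero_apply, Pi.smul_apply, id_eq]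
    module
  have hmean' : ∫ x, (α • id) x ∂ν = 0 :=
    (integral_smul α fun x => x).trans (by rw [hmean, smul_zero])
  have hvar : ∫ x, ‖x‖ ^ 2 ∂μ = (1 - α) ^ 2 * ∫ x, ‖x‖ ^ 2 ∂μ + α ^ 2 * ∫ x, ‖x‖ ^ 2 ∂ν :=
    calc ∫ x, ‖x‖ ^ 2 ∂μ = ∫ p, ‖saMap 0 α p.1 p.2‖ ^ 2 ∂μ.prod ν := by
          conv_lhs => rw [← hinv]
          exact integral_map (measurable_uncurry_saMap measurable_const α).aemeasurable
            (by fun_prop)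
      _ = (1 - α) ^ 2 * ∫ x, ‖x‖ ^ 2 ∂μ + α ^ 2 * ∫ x, ‖x‖ ^ 2 ∂ν := by
          simp only [hsplit]
          rw [integral_norm_add_sq_prod (hμ.const_smul _) (hν.const_smul _) hmean']
          simp only [Pi.smul_apply, id_eq, norm_smul, mul_pow, Real.norm_eq_abs, sq_abs,
            integral_const_mul]
  have hm : 0 ≤ ∫ x, ‖x‖ ^ 2 ∂μ := integral_nonneg fun x => sq_nonneg _
  have hdiv : (2 - α) * ∫ x, ‖x‖ ^ 2 ∂μ = α * ∫ x, ‖x‖ ^ 2 ∂ν :=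
    mul_left_cancel₀ hα.1.ne' (by linear_combination hvar)
  rw [← hdiv]
  exact le_mul_of_one_le_left hm (by linarith [hα.2])

theorem exists_randomStep_saMap_eq {c : Seminorm ℝ E} {K k : ℝ≥0} {T : E → E} {γ α : ℝ}
    (hK : ∀ x, c x ≤ K * ‖x‖) (hk : ∀ x, ‖x‖ ≤ k * c x) (hγ : γ ∈ Set.Ico 0 1)
    (hT : ∀ x y, c (T x - T y) ≤ γ * c (x - y)) {a : E} (ha : T a = a) (hα : α ∈ Set.Ioc 0 1)
    (hν : MemLp id 2 ν) (hmean : ∫ x, x ∂ν = 0) :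
    ∃ μ : Measure E, IsProbabilityMeasure μ ∧ MemLp id 2 μ ∧ randomStep (saMap T α) ν μ = μ ∧
      ∫ x, ‖x - a‖ ^ 2 ∂μ ≤
        2 * (1 + (k * (γ / (1 - γ)) * K) ^ 2) * (α * ∫ x, ‖x‖ ^ 2 ∂ν) := by
  let P : Measure (ℕ → E) := Measure.infinitePi fun _ => ν
  have hsw := measurePreserving_shift_prodMk_eval_zero ν
  have h0 : ∀ x y : E, c ((0 : E → E) x - (0 : E → E) y) ≤ 0 * c (x - y) := fun x y => by
    simp only [Pi.zero_apply, sub_zero, map_zero, zero_mul, le_refl]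
  obtain ⟨X, hXm, hX, hXeq⟩ := exists_memLp_noiseStep_saMap_ae_eq hsw hν hK hk hγ hT hα
  obtain ⟨Y, hYm, hY, hYeq⟩ := exists_memLp_noiseStep_saMap_ae_eq hsw hν hK hk
    (Set.left_mem_Ico.2 one_pos) h0 hα
  have hTm : Measurable T :=
    (continuous_of_seminorm_sub_le (γ := ⟨γ, hγ.1⟩) hK hk hT).measurable
  have hmap : ∀ {Z : (ℕ → E) → E}, Measurable Z → MemLp Z 2 P → MemLp id 2 (P.map Z) :=
    fun hZm hZ => (memLp_map_measure_iff aestronglyMeasurable_id hZm.aemeasurable).2 hZ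
  have hinv : ∀ {S : E → E} {Z : (ℕ → E) → E}, Measurable S → Measurable Z →
      noiseStep (saMap S α) (fun ω n => ω (n + 1)) (fun ω => ω 0) Z =ᵐ[P] Z →
      randomStep (saMap S α) ν (P.map Z) = P.map Z := fun hS hZm hZeq => by
    rw [← map_noiseStep (measurable_uncurry_saMap hS α) hsw hZm, Measure.map_congr hZeq]
  have hXprob : IsProbabilityMeasure (P.map X) := Measure.isProbabilityMeasure_map hXm.aemeasurable
  have hYprob : IsProbabilityMeasure (P.map Y) := Measure.isProbabilityMeasure_map hYm.aemeasurable
  refine ⟨P.map X, hXprob, hmap hXm hX, hinv hTm hXm hXeq, ?_⟩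
  calc ∫ x, ‖x - a‖ ^ 2 ∂P.map X = ∫ ω, ‖X ω - a‖ ^ 2 ∂P :=
        integral_map hXm.aemeasurable (by fun_prop)
    _ ≤ 2 * (1 + (k * (γ / (1 - γ)) * K) ^ 2) * ∫ ω, ‖Y ω‖ ^ 2 ∂P :=
        integral_norm_sub_sq_le_of_noiseStep_ae_eq (measurePreserving_of_prodMk_left hsw) hK hk hγ
          hT ha hα hX hY hXeq hYeq
    _ = 2 * (1 + (k * (γ / (1 - γ)) * K) ^ 2) * ∫ y, ‖y‖ ^ 2 ∂P.map Y := by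
        rw [integral_map hYm.aemeasurable (by fun_prop)]
    _ ≤ 2 * (1 + (k * (γ / (1 - γ)) * K) ^ 2) * (α * ∫ x, ‖x‖ ^ 2 ∂ν) := by
        gcongr
        exact integral_norm_sq_le_of_randomStep_movingAverage_eq (hmap hYm hY) hν hmean hα
          (hinv measurable_zero hYm hYeq)

theorem stmt_4_general {c : Seminorm ℝ E} {K k : ℝ≥0} (hK : ∀ x, c x ≤ K * ‖x‖)
    (hk : ∀ x, ‖x‖ ≤ k * c x) {γ : ℝ} (hγ : γ ∈ Set.Ico 0 1) {T : E → E}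
    (hT : ∀ x y, c (T x - T y) ≤ γ * c (x - y)) {θstar : E} (hfix : T θstar = θstar)
    (hν : Integrable (fun x => ‖x‖ ^ 2) ν) (hmean : ∫ x, x ∂ν = 0) :
    ∃ μstat : ℝ → Measure E,
      (∀ α ∈ Set.Ioc (0 : ℝ) 1,
        (IsProbabilityMeasure (μstat α) ∧ Integrable (fun x => ‖x‖ ^ 2) (μstat α) ∧
          randomStep (saMap T α) ν (μstat α) = μstat α) ∧
        ∀ μ' : Measure E, IsProbabilityMeasure μ' →
          randomStep (saMap T α) ν μ' = μ' → μ' = μstat α) ∧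
      (∀ μ₀ : Measure E, IsProbabilityMeasure μ₀ → Integrable (fun x => ‖x‖ ^ 2) μ₀ →
        ∃ C > 0, ∀ α ∈ Set.Ioc (0 : ℝ) 1, ∀ t : ℕ,
          W2sq c ((randomStep (saMap T α) ν)^[t] μ₀) (μstat α) ≤ C * (1 - α * (1 - √γ)) ^ t) ∧
      ∃ C > 0, ∀ α ∈ Set.Ioc (0 : ℝ) 1, ∫ x, ‖x - θstar‖ ^ 2 ∂μstat α ≤ C * α := by
  have hmemLp : ∀ {μ : Measure E}, Integrable (fun x => ‖x‖ ^ 2) μ → MemLp id 2 μ :=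
    (memLp_two_iff_integrable_sq_norm aestronglyMeasurable_id).2
  have hex : ∀ α ∈ Set.Ioc (0 : ℝ) 1, ∃ μ : Measure E, IsProbabilityMeasure μ ∧ MemLp id 2 μ ∧
      randomStep (saMap T α) ν μ = μ ∧ ∫ x, ‖x - θstar‖ ^ 2 ∂μ ≤
        2 * (1 + (k * (γ / (1 - γ)) * K) ^ 2) * (α * ∫ x, ‖x‖ ^ 2 ∂ν) := fun α hα =>
    exists_randomStep_saMap_eq hK hk hγ hT hfix hα (hmemLp hν) hmean
  choose! μstat hstat using hex
  let C := max 1 (2 * (1 + (k * (γ / (1 - γ)) * K) ^ 2) * ∫ x, ‖x‖ ^ 2 ∂ν)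
  have hC : 0 < C := by positivity
  have hmoment : ∀ α ∈ Set.Ioc (0 : ℝ) 1, ∫ x, ‖x - θstar‖ ^ 2 ∂μstat α ≤ C * α := fun α hα => by
    refine (hstat α hα).2.2.2.trans ?_
    rw [mul_left_comm, mul_comm α]
    exact mul_le_mul_of_nonneg_right (le_max_right _ _) hα.1.le
  refine ⟨μstat, fun α hα => ⟨⟨(hstat α hα).1, ?_, (hstat α hα).2.2.1⟩, fun μ' _ hμ' => ?_⟩,
    fun μ₀ _ hμ₀ => ?_, C, hC, hmoment⟩
  · exact (hstat α hα).2.1.integrable_norm_pow two_ne_zero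
  · have := (hstat α hα).1
    exact eq_of_randomStep_saMap_eq hK hk hγ hT hα hμ' (hstat α hα).2.2.1
  · exact exists_W2sq_randomStep_saMap_iterate_le hK hk hγ hT (fun α hα => (hstat α hα).1)
      (fun α hα => (hstat α hα).2.1) (fun α hα => (hstat α hα).2.2.1)
      (fun α hα => (hmoment α hα).trans (mul_le_of_le_one_right hC.le hα.2)) (hmemLp hμ₀)

end StochasticApproximation

theorem stmt_4 {d : ℕ} (γ : ℝ) (hγ : γ ∈ Set.Ioo (0:ℝ) 1)
    (c : EuclideanSpace ℝ (Fin d) → ℝ) (hc : IsNormLike c)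
    (T : EuclideanSpace ℝ (Fin d) → EuclideanSpace ℝ (Fin d))
    (hT : ∀ θ θ', c (T θ - T θ') ≤ γ * c (θ - θ'))
    (θstar : EuclideanSpace ℝ (Fin d)) (hfix : T θstar = θstar)
    (νw : Measure (EuclideanSpace ℝ (Fin d))) [IsProbabilityMeasure νw]
    (hνint : Integrable (fun x : EuclideanSpace ℝ (Fin d) => x) νw)
    (hνmean : ∫ x, x ∂νw = 0)
    (hν2 : Integrable (fun x : EuclideanSpace ℝ (Fin d) => ‖x‖ ^ 2) νw) :
    ∃ ᾱ' > 0, ∃ μstat : ℝ → Measure (EuclideanSpace ℝ (Fin d)),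
      (∀ α ∈ Set.Ioc (0:ℝ) ᾱ',
        (IsProbabilityMeasure (μstat α) ∧
          Integrable (fun x : EuclideanSpace ℝ (Fin d) => ‖x‖ ^ 2) (μstat α) ∧
          saStep T α νw (μstat α) = μstat α) ∧
        (∀ μ' : Measure (EuclideanSpace ℝ (Fin d)), IsProbabilityMeasure μ' →
          Integrable (fun x : EuclideanSpace ℝ (Fin d) => ‖x‖ ^ 2) μ' →
          saStep T α νw μ' = μ' → μ' = μstat α)) ∧
      (∀ μ₀ : Measure (EuclideanSpace ℝ (Fin d)), IsProbabilityMeasure μ₀ →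
        Integrable (fun x : EuclideanSpace ℝ (Fin d) => ‖x‖ ^ 2) μ₀ →
        ∃ C > 0, ∀ α ∈ Set.Ioc (0:ℝ) ᾱ', ∀ t : ℕ,
          W2sq c ((saStep T α νw)^[t] μ₀) (μstat α) ≤
            C * (1 - α * (1 - Real.sqrt γ)) ^ t) ∧
      (∃ C > 0, ∀ α ∈ Set.Ioc (0:ℝ) ᾱ',
        ∫ x, ‖x - θstar‖ ^ 2 ∂(μstat α) ≤ C * α) := by
  obtain ⟨K, hK⟩ := exists_seminorm_le_norm hc.toSeminorm
  obtain ⟨k, hk⟩ := exists_norm_le_seminorm (c := hc.toSeminorm) hc.pos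
  obtain ⟨μstat, hstat, hW2, hmoment⟩ :=
    stmt_4_general hK hk (Set.Ioo_subset_Ico_self hγ) hT hfix hν2 hνmean
  exact ⟨1, one_pos, μstat,
    fun α hα => ⟨(hstat α hα).1, fun μ' hμ' _ => (hstat α hα).2 μ' hμ'⟩, hW2, hmoment⟩
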